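/- Let c be the orientation cocycle c(z₀, ..., z₄) = −(ζ(2)/2)·(−1)^{(z₀,...,z₄)}. Then for all 0 < φ₁ < φ₂ < 2π, F_c^♭(φ₁, φ₂) = −(ζ(2)/(4π²))·((3φ₁ − 2π)(cos(φ₂) − 1) − (3φ₂ − 4π)(cos(φ₁) − 1)) + (3ζ(2)/(2π²))·(sin(φ₁)·log(sin((φ₂−φ₁)/2)/sin(φ₁/2)) − sin(φ₂)·log(sin((φ₂−φ₁)/2)/sin(φ₂/2))). -/

import Mathlib

open Real Complex

/-- A tuple `(z₁, …, z_k)` of points of `S¹` is *cyclically oriented* if it can be written as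
`z_j = e^{iθ_j}` with `θ₁ < θ₂ < ⋯ < θ_k < θ₁ + 2π`. -/
def CyclicallyOriented {k : ℕ} (z : Fin k → ℂ) : Prop :=
  ∃ θ : Fin k → ℝ, StrictMono θ ∧ (∀ i j : Fin k, θ j < θ i + 2 * Real.pi) ∧
    ∀ j, z j = Complex.exp (θ j * Complex.I)

/-- `c` is the cocycle `c(z̲) = -(ζ(2)/2)·(-1)^{z̲}` (with `ζ(2) = π²/6`), i.e. whenever a
permutation `σ` brings the tuple `z̲` into cyclically oriented position, `c(z̲)` equals
`-(ζ(2)/2)·sgn(σ)`. -/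
def OrientationProp (c : (Fin 5 → ℂ) → ℝ) : Prop :=
  ∀ (z : Fin 5 → ℂ) (σ : Equiv.Perm (Fin 5)),
    CyclicallyOriented (fun i => z (σ i)) →
    c z = -(π ^ 2 / 6 / 2) * ((Equiv.Perm.sign σ : ℤ) : ℝ)

/-- The function `r_c(φ) = -(1/2)(1-e^{iφ})·∫_π^φ (1-cos ζ)⁻¹ ⨍⨍⨍ sin(η-ϕ)·
c(e^{iη}, e^{iϕ}, e^{iψ}, 1, e^{iζ}) dη dϕ dψ dζ`, where `⨍ = (1/2π)∫₀^{2π}`. -/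
noncomputable def rc (c : (Fin 5 → ℂ) → ℝ) (φ : ℝ) : ℂ :=
  -(1 / 2 : ℂ) * (1 - Complex.exp (φ * Complex.I)) *
    ((∫ ζ in (π : ℝ)..φ, (1 - Real.cos ζ)⁻¹ *
        ((1 / (2 * π)) ^ 3 *
          ∫ η in (0:ℝ)..(2 * π), ∫ ϕ in (0:ℝ)..(2 * π), ∫ ψ in (0:ℝ)..(2 * π),
            Real.sin (η - ϕ) *
              c ![Complex.exp (η * Complex.I), Complex.exp (ϕ * Complex.I),
                  Complex.exp (ψ * Complex.I), 1, Complex.exp (ζ * Complex.I)]) : ℝ) : ℂ)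

/-- `θ₁ ⊖ θ₂`: the unique representative of `θ₁ - θ₂` modulo `2π` in `[0, 2π)`. -/
noncomputable def ominus (θ₁ θ₂ : ℝ) : ℝ := toIcoMod Real.two_pi_pos 0 (θ₁ - θ₂)

/-- `v_c^♭(θ₁, θ₂) = Im(e^{iθ₁}·r_c(θ₂ ⊖ θ₁))`. -/
noncomputable def vflat (c : (Fin 5 → ℂ) → ℝ) (θ₁ θ₂ : ℝ) : ℝ :=
  (Complex.exp (θ₁ * Complex.I) * rc c (ominus θ₂ θ₁)).im

/-- `F_c^♭(φ₁, φ₂) = ⨍⨍ sin(ϕ)·c(e^{iη}, e^{iϕ}, 1, e^{iφ₁}, e^{iφ₂}) dη dϕ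
+ v_c^♭(φ₁, φ₂) - v_c^♭(0, φ₂) + v_c^♭(0, φ₁)`. -/
noncomputable def Fflat (c : (Fin 5 → ℂ) → ℝ) (φ₁ φ₂ : ℝ) : ℝ :=
  (1 / (2 * π)) ^ 2 *
      (∫ η in (0:ℝ)..(2 * π), ∫ ϕ in (0:ℝ)..(2 * π),
        Real.sin ϕ * c ![Complex.exp (η * Complex.I), Complex.exp (ϕ * Complex.I), 1,
          Complex.exp (φ₁ * Complex.I), Complex.exp (φ₂ * Complex.I)])
    + vflat c φ₁ φ₂ - vflat c 0 φ₂ + vflat c 0 φ₁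

/-- value of `c` through signs of angle differences -/
lemma aux_c_eq (c : (Fin 5 → ℂ) → ℝ) (hc : OrientationProp c) (t : Fin 5 → ℝ)
    (hinj : Function.Injective t) (h0 : ∀ i, 0 ≤ t i) (h1 : ∀ i, t i < 2 * π) :
    c (fun i => Complex.exp (t i * Complex.I)) =
      -(π ^ 2 / 6 / 2) * ∏ j, ∏ i ∈ Finset.Iio j, Real.sign (t j - t i) := by
  have hmono : StrictMono (t ∘ Tuple.sort t) :=
    (Tuple.monotone_sort t).strictMono_of_injective (hinj.comp (Tuple.sort t).injective)
  have h := hc (fun i => Complex.exp (t i * Complex.I)) (Tuple.sort t)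
    ⟨t ∘ Tuple.sort t, hmono, fun i j => by
      have := h0 (Tuple.sort t i); have := h1 (Tuple.sort t j)
      simp only [Function.comp]; linarith, fun j => rfl⟩
  rw [h]
  have hp := Equiv.Perm.prod_Iio_comp_eq_sign_mul_prod (R := ℝ) (Tuple.sort t)
    (f := fun i j => Real.sign (t j - t i)) (fun i j => by
      rw [← Real.sign_neg]; congr 1; ring)
  have hl : ∏ j, ∏ i ∈ Finset.Iio j, Real.sign (t (Tuple.sort t j) - t (Tuple.sort t i)) = 1 := by
    apply Finset.prod_eq_one; intro j _
    apply Finset.prod_eq_one; intro i hi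
    apply Real.sign_of_pos
    have := hmono (Finset.mem_Iio.1 hi)
    simp only [Function.comp] at this
    linarith
  rw [hl] at hp
  congr 1
  rcases Int.units_eq_one_or (Equiv.Perm.sign (Tuple.sort t)) with hs | hs
  · rw [hs] at hp ⊢
    simpa using hp
  · rw [hs] at hp ⊢
    simp only [Units.val_neg, Units.val_one, Int.cast_neg, Int.cast_one] at hp ⊢
    linarith

lemma aux_c5 (c : (Fin 5 → ℂ) → ℝ) (hc : OrientationProp c) (x0 x1 x2 x3 x4 : ℝ)
    (h01 : x0 ≠ x1) (h02 : x0 ≠ x2) (h03 : x0 ≠ x3) (h04 : x0 ≠ x4) (h12 : x1 ≠ x2)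
    (h13 : x1 ≠ x3) (h14 : x1 ≠ x4) (h23 : x2 ≠ x3) (h24 : x2 ≠ x4) (h34 : x3 ≠ x4)
    (p0 : x0 ∈ Set.Ico 0 (2 * π)) (p1 : x1 ∈ Set.Ico 0 (2 * π)) (p2 : x2 ∈ Set.Ico 0 (2 * π))
    (p3 : x3 ∈ Set.Ico 0 (2 * π)) (p4 : x4 ∈ Set.Ico 0 (2 * π)) :
    c ![Complex.exp (x0 * Complex.I), Complex.exp (x1 * Complex.I), Complex.exp (x2 * Complex.I),
        Complex.exp (x3 * Complex.I), Complex.exp (x4 * Complex.I)] =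
      -(π ^ 2 / 6 / 2) * (Real.sign (x1 - x0) * Real.sign (x2 - x0) * Real.sign (x2 - x1) *
        Real.sign (x3 - x0) * Real.sign (x3 - x1) * Real.sign (x3 - x2) *
        Real.sign (x4 - x0) * Real.sign (x4 - x1) * Real.sign (x4 - x2) * Real.sign (x4 - x3)) := by
  have h := aux_c_eq c hc ![x0, x1, x2, x3, x4] (by
      intro i j hij
      fin_cases i <;> fin_cases j <;> simp_all)
    (by intro i; fin_cases i <;> simp_all)
    (by intro i; fin_cases i <;> simp_all)
  have e : (fun i => Complex.exp ((![x0, x1, x2, x3, x4] i : ℝ) * Complex.I)) =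
      ![Complex.exp (x0 * Complex.I), Complex.exp (x1 * Complex.I), Complex.exp (x2 * Complex.I),
        Complex.exp (x3 * Complex.I), Complex.exp (x4 * Complex.I)] := by
    funext i; fin_cases i <;> rfl
  rw [e] at h
  rw [h]
  have i0 : Finset.Iio (0 : Fin 5) = ∅ := by decide
  have i1 : Finset.Iio (1 : Fin 5) = {0} := by decide
  have i2 : Finset.Iio (2 : Fin 5) = {0, 1} := by decide
  have i3 : Finset.Iio (3 : Fin 5) = {0, 1, 2} := by decide
  have i4 : Finset.Iio (4 : Fin 5) = {0, 1, 2, 3} := by decide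
  rw [Fin.prod_univ_five, i0, i1, i2, i3, i4]
  simp
  ring

/-- integrable with given integral -/
def HasPc (f : ℝ → ℝ) (a b v : ℝ) : Prop :=
  IntervalIntegrable f MeasureTheory.volume a b ∧ ∫ x in a..b, f x = v

lemma HasPc.add {f : ℝ → ℝ} {a b d v w : ℝ} (h : HasPc f a b v) (k : HasPc f b d w) :
    HasPc f a d (v + w) :=
  ⟨h.1.trans k.1, by rw [← intervalIntegral.integral_add_adjacent_intervals h.1 k.1, h.2, k.2]⟩

lemma HasPc.mk' {f : ℝ → ℝ} (F g : ℝ → ℝ) {a b : ℝ} (hab : a ≤ b)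
    (hfg : ∀ x, a < x → x < b → f x = g x) (hF : ∀ x, HasDerivAt F (g x) x)
    (hg : Continuous g) : HasPc f a b (F b - F a) := by
  have e : Set.EqOn g f (Set.uIoo a b) := by
    rw [Set.uIoo_of_le hab]; intro x hx; exact (hfg x hx.1 hx.2).symm
  refine ⟨(hg.intervalIntegrable a b).congr_uIoo e, ?_⟩
  rw [← intervalIntegral.integral_congr_uIoo e]
  exact intervalIntegral.integral_eq_sub_of_hasDerivAt (fun x _ => hF x) (hg.intervalIntegrable a b)

lemma HasPc.const {f : ℝ → ℝ} (C : ℝ) {a b : ℝ} (hab : a ≤ b)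
    (hfg : ∀ x, a < x → x < b → f x = C) : HasPc f a b (C * b - C * a) :=
  HasPc.mk' (fun x => C * x) (fun _ => C) hab hfg
    (fun x => by simpa using (hasDerivAt_id x).const_mul C) continuous_const

lemma HasPc.linsin {f : ℝ → ℝ} (A B y : ℝ) {a b : ℝ} (hab : a ≤ b)
    (hfg : ∀ x, a < x → x < b → f x = (A + B * x) * Real.sin (y - x)) :
    HasPc f a b (((A + B * b) * Real.cos (y - b) + B * Real.sin (y - b)) -
      ((A + B * a) * Real.cos (y - a) + B * Real.sin (y - a))) :=
  HasPc.mk' (fun x => (A + B * x) * Real.cos (y - x) + B * Real.sin (y - x))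
    (fun x => (A + B * x) * Real.sin (y - x)) hab hfg
    (fun x => by
      have h1 : HasDerivAt (fun x : ℝ => y - x) (-1) x := by
        simpa using (hasDerivAt_id x).const_sub y
      have h2 : HasDerivAt (fun x : ℝ => A + B * x) B x := by
        simpa using ((hasDerivAt_id x).const_mul B).const_add A
      have := (h2.mul h1.cos).add (h1.sin.const_mul B)
      refine this.congr_deriv ?_
      ring) (by fun_prop)

lemma sgn_pos {x y : ℝ} (h : y < x) : Real.sign (x - y) = 1 := Real.sign_of_pos (by linarith)
lemma sgn_neg {x y : ℝ} (h : x < y) : Real.sign (x - y) = -1 := Real.sign_of_neg (by linarith)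

/-- integral of a product of three signs -/
lemma aux_tri {f : ℝ → ℝ} (C a b d T : ℝ) (ha : 0 < a) (hb : a < b) (hd : b < d) (hT : d < T)
    (hf : ∀ x, 0 < x → x < T → x ≠ a → x ≠ b → x ≠ d → f x =
      C * (Real.sign (x - a) * Real.sign (x - b) * Real.sign (x - d))) :
    ∫ x in (0:ℝ)..T, f x = C * (T - 2 * a + 2 * b - 2 * d) := by
  have p1 : HasPc f 0 a _ := HasPc.const (-C) ha.le (fun x h h' => by
    rw [hf x h (by linarith) (by linarith) (by linarith) (by linarith), sgn_neg (by linarith),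
      sgn_neg (by linarith), sgn_neg (by linarith)]; ring)
  have p2 : HasPc f a b _ := HasPc.const C hb.le (fun x h h' => by
    rw [hf x (by linarith) (by linarith) (by linarith) (by linarith) (by linarith),
      sgn_pos (by linarith), sgn_neg (by linarith), sgn_neg (by linarith)]; ring)
  have p3 : HasPc f b d _ := HasPc.const (-C) hd.le (fun x h h' => by
    rw [hf x (by linarith) (by linarith) (by linarith) (by linarith) (by linarith),
      sgn_pos (by linarith), sgn_pos (by linarith), sgn_neg (by linarith)]; ring)
  have p4 : HasPc f d T _ := HasPc.const C hT.le (fun x h h' => by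
    rw [hf x (by linarith) (by linarith) (by linarith) (by linarith) (by linarith),
      sgn_pos (by linarith), sgn_pos (by linarith), sgn_pos (by linarith)]; ring)
  rw [(((p1.add p2).add p3).add p4).2]
  ring

lemma aux_psi (c : (Fin 5 → ℂ) → ℝ) (hc : OrientationProp c) (η ϕ ζ a b d : ℝ)
    (hη : η ∈ Set.Ioo 0 (2 * π)) (hϕ : ϕ ∈ Set.Ioo 0 (2 * π)) (hζ : ζ ∈ Set.Ioo 0 (2 * π))
    (n1 : η ≠ ϕ) (n2 : η ≠ ζ) (n3 : ϕ ≠ ζ)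
    (ha : 0 < a) (hb : a < b) (hd : b < d) (hT : d < 2 * π)
    (hab : ∀ x, x ≠ a → x ≠ b → x ≠ d → x ≠ η ∧ x ≠ ϕ ∧ x ≠ ζ)
    (hs : ∀ x, Real.sign (x - η) * Real.sign (x - ϕ) * Real.sign (x - ζ) =
      Real.sign (x - a) * Real.sign (x - b) * Real.sign (x - d)) :
    (∫ ψ in (0:ℝ)..(2 * π), Real.sin (η - ϕ) *
              c ![Complex.exp (η * Complex.I), Complex.exp (ϕ * Complex.I),
                  Complex.exp (ψ * Complex.I), 1, Complex.exp (ζ * Complex.I)]) =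
    -(π ^ 2 / 6 / 2) * (Real.sin (η - ϕ) * (Real.sign (ϕ - η) * Real.sign (ζ - η) *
      Real.sign (ζ - ϕ))) * (2 * π - 2 * a + 2 * b - 2 * d) := by
  apply aux_tri _ _ _ _ _ ha hb hd hT
  intro x x0 xT xa xb xd
  obtain ⟨m1, m2, m3⟩ := hab x xa xb xd
  rw [← hs]
  have h := aux_c5 c hc η ϕ x 0 ζ n1 m1.symm hη.1.ne' n2 m2.symm hϕ.1.ne' n3 x0.ne' m3
    hζ.1.ne ⟨hη.1.le, hη.2⟩ ⟨hϕ.1.le, hϕ.2⟩ ⟨x0.le, xT⟩ ⟨le_refl _, by positivity⟩ ⟨hζ.1.le, hζ.2⟩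
  rw [Complex.ofReal_zero, zero_mul, Complex.exp_zero] at h
  rw [h, sgn_neg hη.1, sgn_neg hϕ.1, sgn_neg x0, sgn_pos hζ.1]
  have : Real.sign (ζ - x) = - Real.sign (x - ζ) := by rw [← Real.sign_neg]; congr 1; ring
  rw [this]
  ring

/-- the integral over `ϕ`, `ψ`, case `η < ζ` -/
lemma aux_phi1 (c : (Fin 5 → ℂ) → ℝ) (hc : OrientationProp c) (η ζ : ℝ)
    (h0 : 0 < η) (h1 : η < ζ) (h2 : ζ < 2 * π) :
    (∫ ϕ in (0:ℝ)..(2 * π), ∫ ψ in (0:ℝ)..(2 * π), Real.sin (η - ϕ) *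
              c ![Complex.exp (η * Complex.I), Complex.exp (ϕ * Complex.I),
                  Complex.exp (ψ * Complex.I), 1, Complex.exp (ζ * Complex.I)]) =
    -(π ^ 2 / 6 / 2) * (-4 * π + 4 * ζ + 2 * (2 * π + 2 * η - 2 * ζ) * Real.cos η +
      2 * (2 * π - 2 * η) * Real.cos (η - ζ)) := by
  set K := -(π ^ 2 / 6 / 2) with hK
  set f := fun ϕ : ℝ => ∫ ψ in (0:ℝ)..(2 * π), Real.sin (η - ϕ) *
              c ![Complex.exp (η * Complex.I), Complex.exp (ϕ * Complex.I),
                  Complex.exp (ψ * Complex.I), 1, Complex.exp (ζ * Complex.I)] with hf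
  have p1 : HasPc f 0 η _ := HasPc.linsin (-K * (2 * π + 2 * η - 2 * ζ)) (2 * K) η h0.le
    (fun x h h' => by
      rw [hf]; dsimp only
      rw [aux_psi c hc η x ζ x η ζ ⟨h0, by linarith⟩ ⟨h, by linarith⟩ ⟨by linarith, h2⟩
        h'.ne' h1.ne (by linarith) h h' h1 h2 (by tauto) (by intro y; ring),
        sgn_neg h', sgn_pos h1, sgn_pos (by linarith)]; ring)
  have p2 : HasPc f η ζ _ := HasPc.linsin (K * (2 * π - 2 * η - 2 * ζ)) (2 * K) η h1.le
    (fun x h h' => by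
      rw [hf]; dsimp only
      rw [aux_psi c hc η x ζ η x ζ ⟨h0, by linarith⟩ ⟨by linarith, by linarith⟩ ⟨by linarith, h2⟩
        h.ne h1.ne (by linarith) h0 h h' h2 (by tauto) (by intro y; ring),
        sgn_pos h, sgn_pos h1, sgn_pos (by linarith)]; ring)
  have p3 : HasPc f ζ (2 * π) _ := HasPc.linsin (-K * (2 * π - 2 * η + 2 * ζ)) (2 * K) η h2.le
    (fun x h h' => by
      rw [hf]; dsimp only
      rw [aux_psi c hc η x ζ η ζ x ⟨h0, by linarith⟩ ⟨by linarith, by linarith⟩ ⟨by linarith, h2⟩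
        (by linarith) h1.ne (by linarith) h0 h1 h h' (by tauto) (by intro y; ring),
        sgn_pos (by linarith), sgn_pos h1, sgn_neg (by linarith)]; ring)
  rw [((p1.add p2).add p3).2]
  rw [Real.cos_sub_two_pi, Real.sin_sub_two_pi, sub_self, sub_zero, Real.cos_zero, Real.sin_zero]
  ring

/-- the integral over `ϕ`, `ψ`, case `ζ < η` -/
lemma aux_phi2 (c : (Fin 5 → ℂ) → ℝ) (hc : OrientationProp c) (η ζ : ℝ)
    (h0 : 0 < ζ) (h1 : ζ < η) (h2 : η < 2 * π) :
    (∫ ϕ in (0:ℝ)..(2 * π), ∫ ψ in (0:ℝ)..(2 * π), Real.sin (η - ϕ) *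
              c ![Complex.exp (η * Complex.I), Complex.exp (ϕ * Complex.I),
                  Complex.exp (ψ * Complex.I), 1, Complex.exp (ζ * Complex.I)]) =
    -(π ^ 2 / 6 / 2) * (-4 * π + 4 * ζ - 2 * (2 * π + 2 * ζ - 2 * η) * Real.cos η +
      2 * (2 * π - 2 * η) * Real.cos (η - ζ)) := by
  set K := -(π ^ 2 / 6 / 2) with hK
  set f := fun ϕ : ℝ => ∫ ψ in (0:ℝ)..(2 * π), Real.sin (η - ϕ) *
              c ![Complex.exp (η * Complex.I), Complex.exp (ϕ * Complex.I),
                  Complex.exp (ψ * Complex.I), 1, Complex.exp (ζ * Complex.I)] with hf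
  have p1 : HasPc f 0 ζ _ := HasPc.linsin (K * (2 * π + 2 * ζ - 2 * η)) (-2 * K) η h0.le
    (fun x h h' => by
      rw [hf]; dsimp only
      rw [aux_psi c hc η x ζ x ζ η ⟨by linarith, h2⟩ ⟨h, by linarith⟩ ⟨h0, by linarith⟩
        (by linarith) h1.ne' (by linarith) h h' h1 h2 (by tauto) (by intro y; ring),
        sgn_neg (by linarith), sgn_neg h1, sgn_pos (by linarith)]; ring)
  have p2 : HasPc f ζ η _ := HasPc.linsin (-K * (2 * π - 2 * ζ - 2 * η)) (-2 * K) η h1.le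
    (fun x h h' => by
      rw [hf]; dsimp only
      rw [aux_psi c hc η x ζ ζ x η ⟨by linarith, h2⟩ ⟨by linarith, by linarith⟩ ⟨h0, by linarith⟩
        (by linarith) h1.ne' (by linarith) h0 h h' h2 (by tauto) (by intro y; ring),
        sgn_neg (by linarith), sgn_neg h1, sgn_neg (by linarith)]; ring)
  have p3 : HasPc f η (2 * π) _ := HasPc.linsin (K * (2 * π - 2 * ζ + 2 * η)) (-2 * K) η h2.le
    (fun x h h' => by
      rw [hf]; dsimp only
      rw [aux_psi c hc η x ζ ζ η x ⟨by linarith, h2⟩ ⟨by linarith, by linarith⟩ ⟨h0, by linarith⟩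
        (by linarith) h1.ne' (by linarith) h0 h1 h h' (by tauto) (by intro y; ring),
        sgn_pos (by linarith), sgn_neg h1, sgn_neg (by linarith)]; ring)
  rw [((p1.add p2).add p3).2]
  rw [Real.cos_sub_two_pi, Real.sin_sub_two_pi, sub_self, sub_zero, Real.cos_zero, Real.sin_zero]
  ring

lemma aux_J (c : (Fin 5 → ℂ) → ℝ) (hc : OrientationProp c) (ζ : ℝ)
    (h0 : 0 < ζ) (h2 : ζ < 2 * π) :
    (∫ η in (0:ℝ)..(2 * π), ∫ ϕ in (0:ℝ)..(2 * π), ∫ ψ in (0:ℝ)..(2 * π), Real.sin (η - ϕ) *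
              c ![Complex.exp (η * Complex.I), Complex.exp (ϕ * Complex.I),
                  Complex.exp (ψ * Complex.I), 1, Complex.exp (ζ * Complex.I)]) =
    -(π ^ 2 / 6 / 2) * (8 * π * (ζ - π + 2 * Real.sin ζ)) := by
  set K := -(π ^ 2 / 6 / 2) with hK
  set f := fun η : ℝ => ∫ ϕ in (0:ℝ)..(2 * π), ∫ ψ in (0:ℝ)..(2 * π), Real.sin (η - ϕ) *
              c ![Complex.exp (η * Complex.I), Complex.exp (ϕ * Complex.I),
                  Complex.exp (ψ * Complex.I), 1, Complex.exp (ζ * Complex.I)] with hf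
  have d1 : ∀ x : ℝ, HasDerivAt (fun x : ℝ => x - ζ) 1 x := fun x => (hasDerivAt_id x).sub_const ζ
  have dl : ∀ A B x : ℝ, HasDerivAt (fun x : ℝ => A + B * x) B x := fun A B x => by
    simpa using ((hasDerivAt_id x).const_mul B).const_add A
  have p1 : HasPc f 0 ζ _ := HasPc.mk'
    (fun x => K * (((-4 * π + 4 * ζ) * x +
      2 * ((2 * π - 2 * ζ + 2 * x) * Real.sin x + 2 * Real.cos x)) +
      2 * ((2 * π + (-2) * x) * Real.sin (x - ζ) - 2 * Real.cos (x - ζ))))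
    (fun x => K * (-4 * π + 4 * ζ + 2 * (2 * π + 2 * x - 2 * ζ) * Real.cos x +
      2 * (2 * π - 2 * x) * Real.cos (x - ζ))) h0.le
    (fun x h h' => aux_phi1 c hc x ζ h h' h2)
    (fun x => by
      have := ((((hasDerivAt_id x).const_mul (-4 * π + 4 * ζ)).add
        ((((dl (2 * π - 2 * ζ) 2 x).mul (Real.hasDerivAt_sin x)).add
          ((Real.hasDerivAt_cos x).const_mul 2)).const_mul 2)).add
        ((((dl (2 * π) (-2) x).mul (d1 x).sin).sub ((d1 x).cos.const_mul 2)).const_mul 2)).const_mul K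
      refine this.congr_deriv ?_
      ring) (by fun_prop)
  have p2 : HasPc f ζ (2 * π) _ := HasPc.mk'
    (fun x => K * (((-4 * π + 4 * ζ) * x -
      2 * ((2 * π + 2 * ζ + (-2) * x) * Real.sin x - 2 * Real.cos x)) +
      2 * ((2 * π + (-2) * x) * Real.sin (x - ζ) - 2 * Real.cos (x - ζ))))
    (fun x => K * (-4 * π + 4 * ζ - 2 * (2 * π + 2 * ζ - 2 * x) * Real.cos x +
      2 * (2 * π - 2 * x) * Real.cos (x - ζ))) h2.le
    (fun x h h' => aux_phi2 c hc x ζ h0 h h')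
    (fun x => by
      have := ((((hasDerivAt_id x).const_mul (-4 * π + 4 * ζ)).sub
        ((((dl (2 * π + 2 * ζ) (-2) x).mul (Real.hasDerivAt_sin x)).sub
          ((Real.hasDerivAt_cos x).const_mul 2)).const_mul 2)).add
        ((((dl (2 * π) (-2) x).mul (d1 x).sin).sub ((d1 x).cos.const_mul 2)).const_mul 2)).const_mul K
      refine this.congr_deriv ?_
      ring) (by fun_prop)
  rw [(p1.add p2).2]
  simp only [Real.cos_two_pi_sub, Real.sin_two_pi_sub, sub_self, zero_sub, Real.cos_zero,
    Real.sin_zero, Real.sin_two_pi, Real.cos_two_pi, Real.sin_neg, Real.cos_neg]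
  ring

/-- antiderivative -/
noncomputable def auxA (x : ℝ) : ℝ :=
  -(x - π) * (Real.cos (x / 2) / Real.sin (x / 2)) + 6 * Real.log (Real.sin (x / 2))

lemma aux_sin_pos (x : ℝ) (h0 : 0 < x) (h2 : x < 2 * π) : 0 < Real.sin (x / 2) :=
  Real.sin_pos_of_pos_of_lt_pi (by linarith) (by linarith)

lemma aux_half (x : ℝ) : Real.sin x = 2 * Real.sin (x / 2) * Real.cos (x / 2) ∧
    Real.cos x = 1 - 2 * Real.sin (x / 2) ^ 2 := by
  have e : x = 2 * (x / 2) := by ring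
  constructor
  · conv_lhs => rw [e]
    rw [Real.sin_two_mul]
  · conv_lhs => rw [e]
    rw [Real.cos_two_mul, Real.cos_sq']; ring

lemma auxA_deriv (x : ℝ) (h0 : 0 < x) (h2 : x < 2 * π) :
    HasDerivAt auxA ((1 - Real.cos x)⁻¹ * (x - π + 2 * Real.sin x)) x := by
  have hs := (aux_sin_pos x h0 h2).ne'
  have hd : HasDerivAt (fun x : ℝ => x / 2) (1 / 2) x := (hasDerivAt_id x).div_const 2
  have := (((hasDerivAt_id x).sub_const π).neg.mul (hd.cos.div hd.sin hs)).add
    ((hd.sin.log hs).const_mul 6)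
  refine this.congr_deriv ?_
  obtain ⟨e1, e2⟩ := aux_half x
  rw [e1, e2]
  have hc := Real.cos_sq' (x / 2)
  have e3 : 1 - (1 - 2 * Real.sin (x / 2) ^ 2) = 2 * Real.sin (x / 2) ^ 2 := by ring
  rw [e3]
  simp only [Pi.neg_apply, Pi.div_apply, id]
  generalize Real.sin (x / 2) = s at *
  generalize Real.cos (x / 2) = k at *
  field_simp
  ring_nf
  rw [hc]
  ring

lemma aux_rc (c : (Fin 5 → ℂ) → ℝ) (hc : OrientationProp c) (φ : ℝ)
    (h0 : 0 < φ) (h2 : φ < 2 * π) :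
    rc c φ = (1 - Complex.exp (φ * Complex.I)) * ((1 / 24 * auxA φ : ℝ) : ℂ) := by
  have hsub : ∀ x ∈ Set.uIcc π φ, 0 < x ∧ x < 2 * π := by
    intro x hx
    rw [Set.mem_uIcc] at hx
    have := Real.pi_pos
    rcases hx with hx | hx <;> constructor <;> linarith
  have hI : (∫ ζ in (π : ℝ)..φ, (1 - Real.cos ζ)⁻¹ *
        ((1 / (2 * π)) ^ 3 *
          ∫ η in (0:ℝ)..(2 * π), ∫ ϕ in (0:ℝ)..(2 * π), ∫ ψ in (0:ℝ)..(2 * π),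
            Real.sin (η - ϕ) *
              c ![Complex.exp (η * Complex.I), Complex.exp (ϕ * Complex.I),
                  Complex.exp (ψ * Complex.I), 1, Complex.exp (ζ * Complex.I)])) =
      -(1 / 12) * auxA φ := by
    have e : ∀ ζ ∈ Set.uIcc π φ, (1 - Real.cos ζ)⁻¹ *
        ((1 / (2 * π)) ^ 3 *
          ∫ η in (0:ℝ)..(2 * π), ∫ ϕ in (0:ℝ)..(2 * π), ∫ ψ in (0:ℝ)..(2 * π),
            Real.sin (η - ϕ) *
              c ![Complex.exp (η * Complex.I), Complex.exp (ϕ * Complex.I),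
                  Complex.exp (ψ * Complex.I), 1, Complex.exp (ζ * Complex.I)]) =
        -(1 / 12) * ((1 - Real.cos ζ)⁻¹ * (ζ - π + 2 * Real.sin ζ)) := by
      intro ζ hζ
      rw [aux_J c hc ζ (hsub ζ hζ).1 (hsub ζ hζ).2]
      have := Real.pi_pos.ne'
      have e : (1 / (2 * π)) ^ 3 * (-(π ^ 2 / 6 / 2) * (8 * π * (ζ - π + 2 * Real.sin ζ))) =
        -(1 / 12) * (ζ - π + 2 * Real.sin ζ) := by field_simp; ring
      rw [e]; ring
    rw [intervalIntegral.integral_congr e, intervalIntegral.integral_const_mul]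
    rw [intervalIntegral.integral_eq_sub_of_hasDerivAt
      (fun x hx => auxA_deriv x (hsub x hx).1 (hsub x hx).2)]
    · have : auxA π = 0 := by simp [auxA]
      rw [this, sub_zero]
    · apply ContinuousOn.intervalIntegrable
      apply ContinuousOn.mul
      · apply ContinuousOn.inv₀ (by fun_prop)
        intro x hx
        have := aux_sin_pos x (hsub x hx).1 (hsub x hx).2
        rw [(aux_half x).2]
        have : 0 < Real.sin (x / 2) ^ 2 := by positivity
        linarith
      · fun_prop
  unfold rc
  rw [hI]
  push_cast
  ring

lemma aux_v (c : (Fin 5 → ℂ) → ℝ) (hc : OrientationProp c) (a b : ℝ)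
    (h0 : a < b) (h2 : b - a < 2 * π) :
    vflat c a b = 1 / 24 * auxA (b - a) * (Real.sin a - Real.sin b) := by
  have ho : ominus b a = b - a := by
    unfold ominus
    rw [toIcoMod_eq_self]
    constructor <;> linarith
  unfold vflat
  rw [ho, aux_rc c hc _ (by linarith) h2, ← mul_assoc, mul_sub, ← Complex.exp_add, mul_one]
  have : (a : ℂ) * Complex.I + ((b - a : ℝ) : ℂ) * Complex.I = (b : ℂ) * Complex.I := by
    push_cast; ring
  rw [this, Complex.im_mul_ofReal, Complex.sub_im, Complex.exp_ofReal_mul_I_im,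
    Complex.exp_ofReal_mul_I_im]
  ring

lemma HasPc.ksin {f : ℝ → ℝ} (K : ℝ) {a b : ℝ} (hab : a ≤ b)
    (hfg : ∀ x, a < x → x < b → f x = K * Real.sin x) :
    HasPc f a b ((-K * Real.cos b) - (-K * Real.cos a)) :=
  HasPc.mk' (fun x => -K * Real.cos x) (fun x => K * Real.sin x) hab hfg
    (fun x => ((Real.hasDerivAt_cos x).const_mul (-K)).congr_deriv (by ring)) (by fun_prop)

lemma HasPc.affcos {f : ℝ → ℝ} (A B : ℝ) {a b : ℝ} (hab : a ≤ b)
    (hfg : ∀ x, a < x → x < b → f x = A + B * Real.cos x) :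
    HasPc f a b ((A * b + B * Real.sin b) - (A * a + B * Real.sin a)) :=
  HasPc.mk' (fun x => A * x + B * Real.sin x) (fun x => A + B * Real.cos x) hab hfg
    (fun x => (((hasDerivAt_id x).const_mul A).add ((Real.hasDerivAt_sin x).const_mul B)).congr_deriv
      (by ring)) (by fun_prop)

lemma aux_c2 (c : (Fin 5 → ℂ) → ℝ) (hc : OrientationProp c) (a b x y : ℝ)
    (h1 : 0 < a) (h12 : a < b) (h2 : b < 2 * π) (x0 : 0 < x) (xT : x < 2 * π)
    (y0 : 0 < y) (yT : y < 2 * π) (n1 : x ≠ y) (n2 : x ≠ a) (n3 : x ≠ b) (n4 : y ≠ a)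
    (n5 : y ≠ b) :
    c ![Complex.exp (x * Complex.I), Complex.exp (y * Complex.I), 1,
          Complex.exp (a * Complex.I), Complex.exp (b * Complex.I)] =
      -(π ^ 2 / 6 / 2) * (Real.sign (y - x) * Real.sign (a - x) * Real.sign (a - y) *
        Real.sign (b - x) * Real.sign (b - y)) := by
  have h := aux_c5 c hc x y 0 a b n1 x0.ne' n2 n3 y0.ne' n4 n5 h1.ne (by linarith) h12.ne
    ⟨x0.le, xT⟩ ⟨y0.le, yT⟩ ⟨le_refl _, by linarith⟩ ⟨h1.le, by linarith⟩ ⟨by linarith, h2⟩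
  rw [Complex.ofReal_zero, zero_mul, Complex.exp_zero] at h
  rw [h, sgn_neg x0, sgn_neg y0, sgn_pos h1, sgn_pos (by linarith : (0:ℝ) < b), sgn_pos h12]
  ring

lemma aux_first (c : (Fin 5 → ℂ) → ℝ) (hc : OrientationProp c) (a b : ℝ)
    (h1 : 0 < a) (h12 : a < b) (h2 : b < 2 * π) :
    (∫ η in (0:ℝ)..(2 * π), ∫ ϕ in (0:ℝ)..(2 * π),
        Real.sin ϕ * c ![Complex.exp (η * Complex.I), Complex.exp (ϕ * Complex.I), 1,
          Complex.exp (a * Complex.I), Complex.exp (b * Complex.I)]) =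
    -(π ^ 2 / 6 / 2) * (Real.cos a * (4 * π - 4 * b) + Real.cos b * (4 * a - 4 * π) +
      4 * b - 4 * a - 4 * π) := by
  set K := -(π ^ 2 / 6 / 2) with hK
  set f := fun η : ℝ => ∫ ϕ in (0:ℝ)..(2 * π),
        Real.sin ϕ * c ![Complex.exp (η * Complex.I), Complex.exp (ϕ * Complex.I), 1,
          Complex.exp (a * Complex.I), Complex.exp (b * Complex.I)] with hf
  have q1 : HasPc f 0 a _ := HasPc.affcos (K * (2 * Real.cos b - 2 * Real.cos a - 2)) (2 * K) h1.le
    (fun x x0 xa => by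
      rw [hf]; dsimp only
      set g := fun ϕ : ℝ => Real.sin ϕ * c ![Complex.exp (x * Complex.I), Complex.exp (ϕ * Complex.I),
          1, Complex.exp (a * Complex.I), Complex.exp (b * Complex.I)] with hg
      have key : ∀ y, 0 < y → y < 2 * π → y ≠ x → y ≠ a → y ≠ b → g y = Real.sin y * (K *
          (Real.sign (y - x) * Real.sign (a - x) * Real.sign (a - y) *
            Real.sign (b - x) * Real.sign (b - y))) := fun y y0 yT n1 n2 n3 => by
        rw [hg]; dsimp only
        rw [aux_c2 c hc a b x y h1 h12 h2 x0 (by linarith) y0 yT n1.symm (by linarith) (by linarith)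
          n2 n3]
      have p1 : HasPc g 0 x _ := HasPc.ksin (-K) x0.le (fun y h h' => by
        rw [key y (by linarith) (by linarith) (by linarith) (by linarith) (by linarith),
          sgn_neg h', sgn_pos (by linarith), sgn_pos (by linarith), sgn_pos (by linarith),
          sgn_pos (by linarith)]; ring)
      have p2 : HasPc g x a _ := HasPc.ksin K xa.le (fun y h h' => by
        rw [key y (by linarith) (by linarith) (by linarith) (by linarith) (by linarith),
          sgn_pos h, sgn_pos (by linarith), sgn_pos (by linarith), sgn_pos (by linarith),
          sgn_pos (by linarith)]; ring)
      have p3 : HasPc g a b _ := HasPc.ksin (-K) h12.le (fun y h h' => by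
        rw [key y (by linarith) (by linarith) (by linarith) (by linarith) (by linarith),
          sgn_pos (by linarith), sgn_pos (by linarith), sgn_neg (by linarith),
          sgn_pos (by linarith), sgn_pos (by linarith)]; ring)
      have p4 : HasPc g b (2 * π) _ := HasPc.ksin K h2.le (fun y h h' => by
        rw [key y (by linarith) (by linarith) (by linarith) (by linarith) (by linarith),
          sgn_pos (by linarith), sgn_pos (by linarith), sgn_neg (by linarith),
          sgn_pos (by linarith), sgn_neg (by linarith)]; ring)
      rw [(((p1.add p2).add p3).add p4).2, Real.cos_zero, Real.cos_two_pi]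
      ring)
  have q2 : HasPc f a b _ := HasPc.affcos (-K * (2 * Real.cos b + 2 * Real.cos a - 2)) (2 * K)
    h12.le
    (fun x xa xb => by
      rw [hf]; dsimp only
      set g := fun ϕ : ℝ => Real.sin ϕ * c ![Complex.exp (x * Complex.I), Complex.exp (ϕ * Complex.I),
          1, Complex.exp (a * Complex.I), Complex.exp (b * Complex.I)] with hg
      have key : ∀ y, 0 < y → y < 2 * π → y ≠ x → y ≠ a → y ≠ b → g y = Real.sin y * (K *
          (Real.sign (y - x) * Real.sign (a - x) * Real.sign (a - y) *
            Real.sign (b - x) * Real.sign (b - y))) := fun y y0 yT n1 n2 n3 => by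
        rw [hg]; dsimp only
        rw [aux_c2 c hc a b x y h1 h12 h2 (by linarith) (by linarith) y0 yT n1.symm (by linarith)
          (by linarith) n2 n3]
      have p1 : HasPc g 0 a _ := HasPc.ksin K h1.le (fun y h h' => by
        rw [key y (by linarith) (by linarith) (by linarith) (by linarith) (by linarith),
          sgn_neg (by linarith), sgn_neg (by linarith), sgn_pos (by linarith),
          sgn_pos (by linarith), sgn_pos (by linarith)]; ring)
      have p2 : HasPc g a x _ := HasPc.ksin (-K) xa.le (fun y h h' => by
        rw [key y (by linarith) (by linarith) (by linarith) (by linarith) (by linarith),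
          sgn_neg h', sgn_neg (by linarith), sgn_neg (by linarith), sgn_pos (by linarith),
          sgn_pos (by linarith)]; ring)
      have p3 : HasPc g x b _ := HasPc.ksin K xb.le (fun y h h' => by
        rw [key y (by linarith) (by linarith) (by linarith) (by linarith) (by linarith),
          sgn_pos (by linarith), sgn_neg (by linarith), sgn_neg (by linarith),
          sgn_pos (by linarith), sgn_pos (by linarith)]; ring)
      have p4 : HasPc g b (2 * π) _ := HasPc.ksin (-K) h2.le (fun y h h' => by
        rw [key y (by linarith) (by linarith) (by linarith) (by linarith) (by linarith),
          sgn_pos (by linarith), sgn_neg (by linarith), sgn_neg (by linarith),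
          sgn_pos (by linarith), sgn_neg (by linarith)]; ring)
      rw [(((p1.add p2).add p3).add p4).2, Real.cos_zero, Real.cos_two_pi]
      ring)
  have q3 : HasPc f b (2 * π) _ := HasPc.affcos (K * (2 * Real.cos a - 2 * Real.cos b - 2)) (2 * K)
    h2.le
    (fun x xb xT => by
      rw [hf]; dsimp only
      set g := fun ϕ : ℝ => Real.sin ϕ * c ![Complex.exp (x * Complex.I), Complex.exp (ϕ * Complex.I),
          1, Complex.exp (a * Complex.I), Complex.exp (b * Complex.I)] with hg
      have key : ∀ y, 0 < y → y < 2 * π → y ≠ x → y ≠ a → y ≠ b → g y = Real.sin y * (K *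
          (Real.sign (y - x) * Real.sign (a - x) * Real.sign (a - y) *
            Real.sign (b - x) * Real.sign (b - y))) := fun y y0 yT n1 n2 n3 => by
        rw [hg]; dsimp only
        rw [aux_c2 c hc a b x y h1 h12 h2 (by linarith) (by linarith) y0 yT n1.symm (by linarith)
          (by linarith) n2 n3]
      have p1 : HasPc g 0 a _ := HasPc.ksin (-K) h1.le (fun y h h' => by
        rw [key y (by linarith) (by linarith) (by linarith) (by linarith) (by linarith),
          sgn_neg (by linarith), sgn_neg (by linarith), sgn_pos (by linarith),
          sgn_neg (by linarith), sgn_pos (by linarith)]; ring)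
      have p2 : HasPc g a b _ := HasPc.ksin K h12.le (fun y h h' => by
        rw [key y (by linarith) (by linarith) (by linarith) (by linarith) (by linarith),
          sgn_neg (by linarith), sgn_neg (by linarith), sgn_neg (by linarith),
          sgn_neg (by linarith), sgn_pos (by linarith)]; ring)
      have p3 : HasPc g b x _ := HasPc.ksin (-K) xb.le (fun y h h' => by
        rw [key y (by linarith) (by linarith) (by linarith) (by linarith) (by linarith),
          sgn_neg h', sgn_neg (by linarith), sgn_neg (by linarith), sgn_neg (by linarith),
          sgn_neg (by linarith)]; ring)
      have p4 : HasPc g x (2 * π) _ := HasPc.ksin K xT.le (fun y h h' => by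
        rw [key y (by linarith) (by linarith) (by linarith) (by linarith) (by linarith),
          sgn_pos (by linarith), sgn_neg (by linarith), sgn_neg (by linarith),
          sgn_neg (by linarith), sgn_neg (by linarith)]; ring)
      rw [(((p1.add p2).add p3).add p4).2, Real.cos_zero, Real.cos_two_pi]
      ring)
  rw [((q1.add q2).add q3).2, Real.sin_zero, Real.sin_two_pi]
  ring

/-- **The integrand `F_c^♭` for the orientation cocycle.** If `c` is the cocycle
`c(z̲) = -(ζ(2)/2)·(-1)^{z̲}`, then for `0 < φ₁ < φ₂ < 2π`, `F_c^♭(φ₁, φ₂)` is given by the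
explicit elementary formula below. -/
theorem Fflat_orientation_cocycle (c : (Fin 5 → ℂ) → ℝ) (hc : OrientationProp c)
    (φ₁ φ₂ : ℝ) (h1 : 0 < φ₁) (h12 : φ₁ < φ₂) (h2 : φ₂ < 2 * π) :
    Fflat c φ₁ φ₂
      = -(π ^ 2 / 6 / (4 * π ^ 2)) *
          ((3 * φ₁ - 2 * π) * (Real.cos φ₂ - 1) - (3 * φ₂ - 4 * π) * (Real.cos φ₁ - 1))
        + (3 * (π ^ 2 / 6) / (2 * π ^ 2)) *
          (Real.sin φ₁ * Real.log (Real.sin ((φ₂ - φ₁) / 2) / Real.sin (φ₁ / 2))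
            - Real.sin φ₂ * Real.log (Real.sin ((φ₂ - φ₁) / 2) / Real.sin (φ₂ / 2))) := by
  have hpi := Real.pi_pos.ne'
  have s1 := aux_sin_pos φ₁ h1 (by linarith)
  have s2 := aux_sin_pos φ₂ (by linarith) h2
  have s3 := aux_sin_pos (φ₂ - φ₁) (by linarith) (by linarith)
  unfold Fflat
  rw [aux_first c hc φ₁ φ₂ h1 h12 h2, aux_v c hc φ₁ φ₂ h12 (by linarith),
    aux_v c hc 0 φ₂ (by linarith) (by linarith), aux_v c hc 0 φ₁ h1 (by linarith),
    Real.log_div s3.ne' s1.ne', Real.log_div s3.ne' s2.ne', sub_zero, sub_zero, Real.sin_zero]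
  have e0 : ∀ X : ℝ, (1 / (2 * π)) ^ 2 * (-(π ^ 2 / 6 / 2) * X) = -(1 / 48) * X := by
    intro X; field_simp; ring
  have e1 : π ^ 2 / 6 / (4 * π ^ 2) = 1 / 24 := by field_simp; norm_num
  have e2 : 3 * (π ^ 2 / 6) / (2 * π ^ 2) = 1 / 4 := by field_simp; norm_num
  rw [e0, e1, e2]
  have k1 : Real.sin φ₁ * (Real.cos (φ₁ / 2) / Real.sin (φ₁ / 2)) = 1 + Real.cos φ₁ := by
    rw [(aux_half φ₁).1, (aux_half φ₁).2]
    have := Real.cos_sq' (φ₁ / 2)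
    field_simp
    linarith
  have k2 : Real.sin φ₂ * (Real.cos (φ₂ / 2) / Real.sin (φ₂ / 2)) = 1 + Real.cos φ₂ := by
    rw [(aux_half φ₂).1, (aux_half φ₂).2]
    have := Real.cos_sq' (φ₂ / 2)
    field_simp
    linarith
  have k3 : (Real.sin φ₁ - Real.sin φ₂) *
      (Real.cos ((φ₂ - φ₁) / 2) / Real.sin ((φ₂ - φ₁) / 2)) = -(Real.cos φ₁ + Real.cos φ₂) := by
    rw [Real.sin_sub_sin, Real.cos_add_cos]
    have : (φ₁ - φ₂) / 2 = -((φ₂ - φ₁) / 2) := by ring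
    rw [this, Real.sin_neg, Real.cos_neg]
    field_simp
  unfold auxA
  linear_combination (1 / 24 * (-(φ₂ - φ₁ - π))) * k3 + (1 / 24 * (-(φ₂ - π))) * k2
    - (1 / 24 * (-(φ₁ - π))) * k1
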